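/- Let A be a circular m×n matrix and N ⊂ [n] a nonempty set of columns. Then the minor of A obtained by deletion of N — the submatrix of A obtained by removing all columns indexed by N and all rows having an entry equal to 1 in some column indexed by N — is an interval matrix: its columns can be linearly ordered so that every remaining row is the incidence vector of a set of consecutive columns in that order. -/

import Mathlib

namespace CircPaper

/-- The circular interval `[a,b]_n` in `ZMod n`:
`{a + t : 0 ≤ t ≤ b - a}`, where `b - a` is the least nonnegative residue. -/
def cInt (n : ℕ) (a b : ZMod n) : Set (ZMod n) :=
  {x | ∃ t : ℕ, t ≤ (b - a).val ∧ x = a + (t : ZMod n)}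

/-- A circular 0,1-matrix of order `m × n`, described by the endpoints `lo i ≠ up i`
of the circular interval `[lo i, up i]_n` whose incidence vector is row `i`.
It has no dominating rows and no zero columns (rows are nonempty intervals, so there
are no zero rows). -/
structure CircularMatrix (m n : ℕ) where
  lo : Fin m → ZMod n
  up : Fin m → ZMod n
  ne : ∀ i, lo i ≠ up i
  noDom : ∀ i j, i ≠ j → ¬ cInt n (lo j) (up j) ⊆ cInt n (lo i) (up i)
  noZeroCol : ∀ c : ZMod n, ∃ i, c ∈ cInt n (lo i) (up i)

variable {m n : ℕ}

/-- The support of row `i` of `A`. -/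
def CircularMatrix.row (A : CircularMatrix m n) (i : Fin m) : Set (ZMod n) :=
  cInt n (A.lo i) (A.up i)

/-- The rows surviving in the contraction minor `A/N`: rows that do not dominate
another row after the columns in `N` have been removed. -/
def CircularMatrix.minorRows (A : CircularMatrix m n) (N : Set (ZMod n)) : Set (Fin m) :=
  {i | ¬ ∃ j, j ≠ i ∧ A.row j \ N ⊆ A.row i \ N}

/-- `A/N ≈ C_s^p`: the contraction minor `A/N` is isomorphic, via a bijection `ρ` of its
rows and a bijection `σ` of its columns, to the `s × s` circulant matrix `C_s^p`, whose
row `r` is the incidence vector of the circular interval `[r, r + p)_s`. -/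
def ContractIsoCirculant (A : CircularMatrix m n) (N : Set (ZMod n)) (s p : ℕ) : Prop :=
  ∃ (ρ : ↥(A.minorRows N) ≃ ZMod s) (σ : ↥(Nᶜ) ≃ ZMod s),
    ∀ (i : ↥(A.minorRows N)) (c : ↥(Nᶜ)),
      (c : ZMod n) ∈ A.row i.1 ↔ (σ c - ρ i).val < p

/-- Kinds of arcs of the digraph `F(A)`: one row arc `(lo i - 1, up i)` for each row `i`
of `A`; a forward short arc `(j-1, j)` and a reverse short arc `(j, j-1)` for every
vertex `j`. -/
inductive ArcKind (m : ℕ) where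
  | row (i : Fin m)
  | fwd
  | bwd
  deriving DecidableEq

/-- Whether an arc kind is a row arc. -/
def ArcKind.isRow {m : ℕ} : ArcKind m → Bool
  | .row _ => true
  | _ => false

/-- A directed circuit in the digraph `F(A)`: a cyclic sequence `vert 0, vert 1, …`
of `len` pairwise distinct vertices of `[n]`, together with, for each `t`, the kind
of the arc of `F(A)` joining `vert t` to `vert (t+1)`. -/
structure Circuit {m n : ℕ} (A : CircularMatrix m n) where
  len : ℕ
  pos : 0 < len
  vert : ZMod len → ZMod n
  inj : Function.Injective vert
  kind : ZMod len → ArcKind m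
  step_row : ∀ t i, kind t = .row i → vert t = A.lo i - 1 ∧ vert (t + 1) = A.up i
  step_fwd : ∀ t, kind t = .fwd → vert (t + 1) = vert t + 1
  step_bwd : ∀ t, kind t = .bwd → vert (t + 1) = vert t - 1

/-- The length of an arc of `F(A)`: `v - u` for a row arc `(u, v) = (lo i - 1, up i)`,
`1` for a forward short arc and `-1` for a reverse short arc. -/
def CircularMatrix.arcLen (A : CircularMatrix m n) : ArcKind m → ℤ
  | .row i => ((A.up i - (A.lo i - 1)).val : ℤ)
  | .fwd => 1
  | .bwd => -1

/-- The sum of the lengths of the arcs of the circuit `Γ`. -/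
def Circuit.windSum {A : CircularMatrix m n} (Γ : Circuit A) : ℤ :=
  ∑ t ∈ Finset.range Γ.len, A.arcLen (Γ.kind (t : ZMod Γ.len))

/-- `Γ` has winding number `p`, i.e. the sum of the lengths of its arcs is `p * n`. -/
def Circuit.HasWinding {A : CircularMatrix m n} (Γ : Circuit A) (p : ℕ) : Prop :=
  Γ.windSum = (p : ℤ) * n

/-- The number of row arcs of the circuit `Γ`. -/
def Circuit.rowArcs {A : CircularMatrix m n} (Γ : Circuit A) : ℕ :=
  ((Finset.range Γ.len).filter (fun (t : ℕ) => (Γ.kind (t : ZMod Γ.len)).isRow = true)).card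

/-- The vertex set of the circuit `Γ`. -/
def Circuit.verts {A : CircularMatrix m n} (Γ : Circuit A) : Set (ZMod n) :=
  Set.range Γ.vert

/-- The circles of `Γ`: heads of forward short arcs of `Γ`. -/
def Circuit.circles {A : CircularMatrix m n} (Γ : Circuit A) : Set (ZMod n) :=
  {j | ∃ t, Γ.kind t = .fwd ∧ Γ.vert (t + 1) = j}

/-- The crosses of `Γ`: tails of reverse short arcs of `Γ`. -/
def Circuit.crosses {A : CircularMatrix m n} (Γ : Circuit A) : Set (ZMod n) :=
  {j | ∃ t, Γ.kind t = .bwd ∧ Γ.vert t = j}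

/-- The bullets of `Γ`: the vertices of `[n]` that are neither circles nor crosses. -/
def Circuit.bullets {A : CircularMatrix m n} (Γ : Circuit A) : Set (ZMod n) :=
  (Γ.circles ∪ Γ.crosses)ᶜ

/-- The essential bullets of `Γ`: the bullets that are vertices of `Γ`. -/
def Circuit.essBullets {A : CircularMatrix m n} (Γ : Circuit A) : Set (ZMod n) :=
  Γ.verts ∩ Γ.bullets

/-- The arc `(x, y)` jumps over `j` iff `j ∈ (x, y]_n`. -/
def jumps (n : ℕ) (x y j : ZMod n) : Prop := j ∈ cInt n x y ∧ j ≠ x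

/-- The set of vertices over which the row arc `(lo i - 1, up i)` of row `i` jumps. -/
def CircularMatrix.jumpSet (A : CircularMatrix m n) (i : Fin m) : Set (ZMod n) :=
  {j | jumps n (A.lo i - 1) (A.up i) j}

/-- The row arc of row `i` of `A` is a bad arc w.r.t. the circuit `Γ` with winding
number `p`: it jumps over exactly `p - 1` essential bullets of `Γ`. -/
def Circuit.BadArc {A : CircularMatrix m n} (Γ : Circuit A) (p : ℕ) (i : Fin m) : Prop :=
  (Γ.essBullets ∩ A.jumpSet i).ncard = p - 1

/-- A family of pairwise vertex-disjoint circuits. -/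
def DisjFamily {A : CircularMatrix m n} {a : ℕ} (Γ : Fin a → Circuit A) : Prop :=
  ∀ i j, i ≠ j → Disjoint (Γ i).verts (Γ j).verts

/-- The essential bullets of a family of circuits: the union of the essential bullets
of its members. -/
def famEssBullets {A : CircularMatrix m n} {a : ℕ} (Γ : Fin a → Circuit A) : Set (ZMod n) :=
  ⋃ i, (Γ i).essBullets

/-!
Cut the circle `ZMod n` at a deleted column `z ∈ N` and read off the remaining columns clockwise
from `z`. A circular interval that survives the deletion avoids `z`, so it does not wrap around the
cut and unrolls to an ordinary interval of distances from `z`.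
-/

section CutCircle

variable [NeZero n] {a b x z : ZMod n}

theorem mem_cInt_iff_val_sub_le : x ∈ cInt n a b ↔ (x - a).val ≤ (b - a).val := by
  constructor
  · rintro ⟨t, ht, rfl⟩
    have ht_lt : t < n := ht.trans_lt (ZMod.val_lt _)
    rwa [add_sub_cancel_left, ZMod.val_cast_of_lt ht_lt]
  · intro h
    exact ⟨(x - a).val, h, by rw [ZMod.natCast_zmod_val, add_sub_cancel]⟩

theorem right_mem_cInt : b ∈ cInt n a b :=
  mem_cInt_iff_val_sub_le.2 le_rfl

theorem val_sub_eq_add_of_mem_cInt (hx : x ∈ cInt n a b) (hz : z ∉ cInt n a b) :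
    (x - z).val = (a - z).val + (x - a).val := by
  rw [mem_cInt_iff_val_sub_le] at hx hz
  have hxz : (x - a).val < (z - a).val := hx.trans_lt (not_le.1 hz)
  have hza : z - a ≠ 0 := fun h => by simp [h] at hxz
  have val_a : (a - z).val = n - (z - a).val := by
    rw [← neg_sub z a, ZMod.neg_val, if_neg hza]
  have no_wrap : (a - z).val + (x - a).val < n := by
    have := ZMod.val_lt (z - a)
    omega
  rw [← ZMod.val_add_of_lt no_wrap, add_comm, sub_add_sub_cancel]

theorem cInt_eq_preimage_Icc_of_notMem (hz : z ∉ cInt n a b) :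
    cInt n a b = (fun x => (x - z).val) ⁻¹' Set.Icc (a - z).val (b - z).val := by
  have val_b := val_sub_eq_add_of_mem_cInt right_mem_cInt hz
  ext x
  rw [Set.mem_preimage, Set.mem_Icc]
  constructor
  · intro hx
    have val_x := val_sub_eq_add_of_mem_cInt hx hz
    rw [mem_cInt_iff_val_sub_le] at hx
    omega
  · rintro ⟨hax, hxb⟩
    have val_x : (x - a).val = (x - z).val - (a - z).val := by
      rw [← ZMod.val_sub hax, sub_sub_sub_cancel_right]
    rw [mem_cInt_iff_val_sub_le]
    omega

theorem injective_val_sub (z : ZMod n) : Function.Injective fun x : ZMod n => (x - z).val :=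
  (ZMod.val_injective n).comp sub_left_injective

theorem statement_18_general {N : Set (ZMod n)} (hN : N.Nonempty) :
    ∃ σ : ↥(Nᶜ) → ℕ, Function.Injective σ ∧
      ∀ a b : ZMod n, cInt n a b ∩ N = ∅ →
        ∀ c₁ c₂ c₃ : ↥(Nᶜ), σ c₁ ≤ σ c₂ → σ c₂ ≤ σ c₃ →
          (c₁ : ZMod n) ∈ cInt n a b → (c₃ : ZMod n) ∈ cInt n a b →
            (c₂ : ZMod n) ∈ cInt n a b := by
  obtain ⟨z, hz⟩ := hN
  refine ⟨fun c => (c - z : ZMod n).val, (injective_val_sub z).comp Subtype.val_injective, ?_⟩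
  intro a b hab c₁ c₂ c₃ h₁₂ h₂₃ h₁ h₃
  have hz_notMem : z ∉ cInt n a b := (Set.disjoint_iff_inter_eq_empty.2 hab).notMem_of_mem_right hz
  rw [cInt_eq_preimage_Icc_of_notMem hz_notMem] at h₁ h₃ ⊢
  exact ⟨h₁.1.trans h₁₂, h₂₃.trans h₃.2⟩

end CutCircle

/-- deletion minors of circular matrices are interval matrices.
Let `A` be a circular `m × n` matrix and `N ⊂ [n]` a nonempty set of columns.  The minor
obtained by deletion of `N` (remove the columns in `N` and all rows with a `1` in some
column of `N`) is an interval matrix: the remaining columns can be linearly ordered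
(by an injection `σ` into `ℕ`) so that every remaining row is the incidence vector of a
set of consecutive columns in that order. -/
theorem statement_18 {m n : ℕ} (hn : 0 < n) (A : CircularMatrix m n)
    (N : Set (ZMod n)) (hN : N.Nonempty) :
    ∃ σ : ↥(Nᶜ) → ℕ, Function.Injective σ ∧
      ∀ i : Fin m, A.row i ∩ N = ∅ →
        ∀ c₁ c₂ c₃ : ↥(Nᶜ), σ c₁ ≤ σ c₂ → σ c₂ ≤ σ c₃ →
          (c₁ : ZMod n) ∈ A.row i → (c₃ : ZMod n) ∈ A.row i → (c₂ : ZMod n) ∈ A.row i := by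
  have : NeZero n := ⟨hn.ne'⟩
  obtain ⟨σ, σ_injective, σ_interval⟩ := statement_18_general hN
  exact ⟨σ, σ_injective, fun i => σ_interval (A.lo i) (A.up i)⟩

end CircPaper
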